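/- Let n, r, s, t be natural numbers with n = r + 2s + 3t and r ≤ n. Then there exist nonzero rational constants C₁, C₂, C₃ depending only on n and r such that, in U(𝔤), modulo the left ideal U(𝔤)𝔫₊: (i) (E₂₁ⁿF₂₁^{2n})_L(a^r b^s c^t) ≡ C₁ · (H₂₁−n+1)(H₂₁−n+2)⋯(H₂₁−n+r) · (E₂₁^{n−r}F₂₁^{2(n−r)})_L(b^s c^t); (ii) (E₁₀ⁿF₃₁ⁿ)_L(a^r b^s c^t) ≡ C₂ · (H₁₀−n+1)⋯(H₁₀−n+r) · (E₁₀^{n−r}F₃₁^{n−r})_L(b^s c^t); (iii) (E₁₁ⁿF₃₂ⁿ)_L(a^r b^s c^t) ≡ C₃ · (H₁₁−n+1)⋯(H₁₁−n+r) · (E₁₁^{n−r}F₃₂^{n−r})_L(b^s c^t). (The paper gives C₁ = (−1)^r (n!/(n−r)!)((2n)!/(2n−2r)!) and C₂ = C₃ = (n!/(n−r)!)².) -/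

import Mathlib

/-- The canonical embedding of a Lie algebra into its universal enveloping algebra. -/
noncomputable def ιU {L : Type*} [LieRing L] [LieAlgebra ℂ L] (x : L) :
    UniversalEnvelopingAlgebra ℂ L :=
  UniversalEnvelopingAlgebra.ι ℂ x

/-- The adjoint action `X_L : f ↦ Xf − fX` of `X ∈ L` on `U(L)`. -/
noncomputable def adU {L : Type*} [LieRing L] [LieAlgebra ℂ L] (x : L)
    (f : UniversalEnvelopingAlgebra ℂ L) : UniversalEnvelopingAlgebra ℂ L :=
  ιU x * f - f * ιU x

/-- A Lie algebra over `ℂ` equipped with Chevalley generators of type `G₂`: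
`E₁₀, F₁₀, H₁₀` correspond to the short simple root `α` and `E₀₁, F₀₁, H₀₁` to the long
simple root `β`, subject to the Chevalley relations and the Serre relations, and the
generators generate the Lie algebra.  (By Serre's theorem such a Lie algebra is a quotient of
the simple Lie algebra of type `G₂`.) -/
structure G2Gens (L : Type*) [LieRing L] [LieAlgebra ℂ L] where
  E10 : L
  E01 : L
  F10 : L
  F01 : L
  H10 : L
  H01 : L
  hH10H01 : ⁅H10, H01⁆ = 0
  hE10F10 : ⁅E10, F10⁆ = H10
  hE01F01 : ⁅E01, F01⁆ = H01
  hE10F01 : ⁅E10, F01⁆ = 0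
  hE01F10 : ⁅E01, F10⁆ = 0
  hH10E10 : ⁅H10, E10⁆ = (2 : ℂ) • E10
  hH01E01 : ⁅H01, E01⁆ = (2 : ℂ) • E01
  hH10E01 : ⁅H10, E01⁆ = (-3 : ℂ) • E01
  hH01E10 : ⁅H01, E10⁆ = (-1 : ℂ) • E10
  hH10F10 : ⁅H10, F10⁆ = (-2 : ℂ) • F10
  hH01F01 : ⁅H01, F01⁆ = (-2 : ℂ) • F01
  hH10F01 : ⁅H10, F01⁆ = (3 : ℂ) • F01
  hH01F10 : ⁅H01, F10⁆ = (1 : ℂ) • F10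
  serreE1 : ⁅E10, ⁅E10, ⁅E10, ⁅E10, E01⁆⁆⁆⁆ = 0
  serreE2 : ⁅E01, ⁅E01, E10⁆⁆ = 0
  serreF1 : ⁅F10, ⁅F10, ⁅F10, ⁅F10, F01⁆⁆⁆⁆ = 0
  serreF2 : ⁅F01, ⁅F01, F10⁆⁆ = 0
  generates : LieSubalgebra.lieSpan ℂ L {E10, E01, F10, F01, H10, H01} = ⊤

namespace G2Gens

variable {L : Type*} [LieRing L] [LieAlgebra ℂ L] (g : G2Gens L)

/-- The root vector `E₁₁ = [E₁₀, E₀₁]`. -/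
def E11 : L := ⁅g.E10, g.E01⁆
/-- The root vector `E₂₁ = (1/2)[E₁₁, E₁₀]`. -/
noncomputable def E21 : L := (2 : ℂ)⁻¹ • ⁅g.E11, g.E10⁆
/-- The root vector `E₃₁ = (1/3)[E₂₁, E₁₀]`. -/
noncomputable def E31 : L := (3 : ℂ)⁻¹ • ⁅g.E21, g.E10⁆
/-- The root vector `E₃₂ = [E₃₁, E₀₁]`. -/
noncomputable def E32 : L := ⁅g.E31, g.E01⁆
/-- The root vector `F₁₁ = [F₀₁, F₁₀]`. -/
def F11 : L := ⁅g.F01, g.F10⁆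
/-- The root vector `F₂₁ = (1/2)[F₁₀, F₁₁]`. -/
noncomputable def F21 : L := (2 : ℂ)⁻¹ • ⁅g.F10, g.F11⁆
/-- The root vector `F₃₁ = (1/3)[F₁₀, F₂₁]`. -/
noncomputable def F31 : L := (3 : ℂ)⁻¹ • ⁅g.F10, g.F21⁆
/-- The root vector `F₃₂ = [F₀₁, F₃₁]`. -/
noncomputable def F32 : L := ⁅g.F01, g.F31⁆
/-- The coroot `H₁₁ = H₁₀ + 3H₀₁`. -/
def H11 : L := g.H10 + (3 : ℂ) • g.H01
/-- The coroot `H₂₁ = 2H₁₀ + 3H₀₁`. -/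
def H21 : L := (2 : ℂ) • g.H10 + (3 : ℂ) • g.H01
/-- The coroot `H₃₁ = H₁₀ + H₀₁`. -/
def H31 : L := g.H10 + g.H01
/-- The coroot `H₃₂ = H₁₀ + 2H₀₁`. -/
def H32 : L := g.H10 + (2 : ℂ) • g.H01

/-- The element `a = E₂₁` of `U(𝔤)`. -/
noncomputable def aU : UniversalEnvelopingAlgebra ℂ L := ιU g.E21
/-- The element `b = E₃₁E₁₁ − E₃₂E₁₀` of `U(𝔤)`. -/
noncomputable def bU : UniversalEnvelopingAlgebra ℂ L :=
  ιU g.E31 * ιU g.E11 - ιU g.E32 * ιU g.E10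
/-- The element `c = E₃₁²E₀₁ − E₃₂E₃₁H₀₁ − E₃₂²F₀₁` of `U(𝔤)`. -/
noncomputable def cU : UniversalEnvelopingAlgebra ℂ L :=
  ιU g.E31 * ιU g.E31 * ιU g.E01 - ιU g.E32 * ιU g.E31 * ιU g.H01
    - ιU g.E32 * ιU g.E32 * ιU g.F01
/-- The element `u = (1/3)a² − b` of `U(𝔤)`. -/
noncomputable def uU : UniversalEnvelopingAlgebra ℂ L :=
  (3 : ℂ)⁻¹ • (g.aU * g.aU) - g.bU
/-- The element `v = (2/9)a³ − ab − 3c` of `U(𝔤)`. -/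
noncomputable def vU : UniversalEnvelopingAlgebra ℂ L :=
  ((2 : ℂ) / 9) • (g.aU * g.aU * g.aU) - g.aU * g.bU - (3 : ℂ) • g.cU

/-- `f ≡ h (mod U(𝔤)𝔫₊)`:  `f − h` lies in the left ideal of `U(𝔤)` generated by `E₁₀`
and `E₀₁`. -/
def EqModN (f h : UniversalEnvelopingAlgebra ℂ L) : Prop :=
  ∃ A B : UniversalEnvelopingAlgebra ℂ L, f - h = A * ιU g.E10 + B * ιU g.E01

end G2Gens

theorem lie_flip {L : Type*} [LieRing L] {x y z : L} (h : ⁅x, y⁆ = z) : ⁅y, x⁆ = -z := by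
  rw [← lie_skew, h]

namespace G2Gens
variable {L : Type*} [LieRing L] [LieAlgebra ℂ L] (g : G2Gens L)

-- brackets of the simple generators in the other order
theorem F10E10 : ⁅g.F10, g.E10⁆ = -g.H10 := lie_flip g.hE10F10
theorem F01E01 : ⁅g.F01, g.E01⁆ = -g.H01 := lie_flip g.hE01F01
theorem F10E01 : ⁅g.F10, g.E01⁆ = 0 := by simpa using lie_flip g.hE01F10
theorem F01E10 : ⁅g.F01, g.E10⁆ = 0 := by simpa using lie_flip g.hE10F01
theorem E10H10 : ⁅g.E10, g.H10⁆ = (-2 : ℂ) • g.E10 := by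
  rw [lie_flip g.hH10E10]; module
theorem E10H01 : ⁅g.E10, g.H01⁆ = (1 : ℂ) • g.E10 := by
  rw [lie_flip g.hH01E10]; module
theorem E01H10 : ⁅g.E01, g.H10⁆ = (3 : ℂ) • g.E01 := by
  rw [lie_flip g.hH10E01]; module
theorem E01H01 : ⁅g.E01, g.H01⁆ = (-2 : ℂ) • g.E01 := by
  rw [lie_flip g.hH01E01]; module
theorem F10H10 : ⁅g.F10, g.H10⁆ = (2 : ℂ) • g.F10 := by
  rw [lie_flip g.hH10F10]; module
theorem F10H01 : ⁅g.F10, g.H01⁆ = (-1 : ℂ) • g.F10 := by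
  rw [lie_flip g.hH01F10]; module
theorem F01H10 : ⁅g.F01, g.H10⁆ = (-3 : ℂ) • g.F01 := by
  rw [lie_flip g.hH10F01]; module
theorem F01H01 : ⁅g.F01, g.H01⁆ = (2 : ℂ) • g.F01 := by
  rw [lie_flip g.hH01F01]; module

-- upward brackets
theorem E10E01 : ⁅g.E10, g.E01⁆ = g.E11 := rfl
theorem E01E10 : ⁅g.E01, g.E10⁆ = -g.E11 := lie_flip rfl
theorem E11E10 : ⁅g.E11, g.E10⁆ = (2 : ℂ) • g.E21 := by rw [E21]; module
theorem E21E10 : ⁅g.E21, g.E10⁆ = (3 : ℂ) • g.E31 := by rw [E31]; module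
theorem E31E01 : ⁅g.E31, g.E01⁆ = g.E32 := rfl
theorem E10E11 : ⁅g.E10, g.E11⁆ = (-2 : ℂ) • g.E21 := by
  rw [lie_flip g.E11E10]; module
theorem E10E21 : ⁅g.E10, g.E21⁆ = (-3 : ℂ) • g.E31 := by
  rw [lie_flip g.E21E10]; module
theorem E01E31 : ⁅g.E01, g.E31⁆ = -g.E32 := lie_flip rfl
theorem E10E31 : ⁅g.E10, g.E31⁆ = 0 := by
  have h := g.serreE1
  rw [E10E01, E10E11, lie_smul, E10E21, lie_smul, lie_smul, smul_smul] at h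
  exact (smul_eq_zero.1 h).resolve_left (by norm_num)
theorem E01E11 : ⁅g.E01, g.E11⁆ = 0 := by
  have h := g.serreE2
  rwa [E01E10, lie_neg, neg_eq_zero] at h
theorem E01E21 : ⁅g.E01, g.E21⁆ = 0 := by
  rw [E21, lie_smul, leibniz_lie, E01E11, E01E10]; simp
theorem E21E11 : ⁅g.E21, g.E11⁆ = (3 : ℂ) • g.E32 := by
  have h : g.E32 = (3 : ℂ)⁻¹ • ⁅g.E21, g.E11⁆ := by
    rw [E32, E31, smul_lie, lie_lie, lie_flip g.E01E21, E10E01]; simp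
  rw [h]; module
theorem E01E32 : ⁅g.E01, g.E32⁆ = 0 := by
  have h : (3 : ℂ) • ⁅g.E01, g.E32⁆ = 0 := by
    rw [← lie_smul, ← E21E11, leibniz_lie, E01E21, E01E11]; simp
  exact (smul_eq_zero.1 h).resolve_left (by norm_num)
theorem E10E32 : ⁅g.E10, g.E32⁆ = 0 := by
  have h1 : ⁅g.E10, g.E32⁆ = ⁅g.E31, g.E11⁆ := by
    rw [E32, leibniz_lie, E10E31, E10E01]; simp
  have h : (3 : ℂ) • ⁅g.E10, g.E32⁆ = (-3 : ℂ) • ⁅g.E10, g.E32⁆ := by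
    rw [← lie_smul, ← E21E11, leibniz_lie, E10E21, E10E11, h1]; simp
  have h2 : (6 : ℂ) • ⁅g.E10, g.E32⁆ = 0 := by
    rw [← sub_eq_zero] at h; rw [← h]; module
  exact (smul_eq_zero.1 h2).resolve_left (by norm_num)

-- downward brackets
theorem F01F10 : ⁅g.F01, g.F10⁆ = g.F11 := rfl
theorem F10F01 : ⁅g.F10, g.F01⁆ = -g.F11 := lie_flip rfl
theorem F10F11 : ⁅g.F10, g.F11⁆ = (2 : ℂ) • g.F21 := by rw [F21]; module
theorem F10F21 : ⁅g.F10, g.F21⁆ = (3 : ℂ) • g.F31 := by rw [F31]; module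
theorem F01F31 : ⁅g.F01, g.F31⁆ = g.F32 := rfl
theorem F10F31 : ⁅g.F10, g.F31⁆ = 0 := by
  have h := g.serreF1
  rw [F10F01, lie_neg, F10F11, lie_neg, lie_smul, F10F21, lie_neg, lie_smul, lie_smul,
    smul_smul, neg_eq_zero] at h
  exact (smul_eq_zero.1 h).resolve_left (by norm_num)
theorem F01F11 : ⁅g.F01, g.F11⁆ = 0 := g.serreF2
theorem F01F21 : ⁅g.F01, g.F21⁆ = 0 := by
  rw [F21, lie_smul, leibniz_lie, F01F11, F01F10]; simp
theorem F11F21 : ⁅g.F11, g.F21⁆ = (3 : ℂ) • g.F32 := by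
  have h : g.F32 = (3 : ℂ)⁻¹ • ⁅g.F11, g.F21⁆ := by
    rw [F32, F31, lie_smul, leibniz_lie, F01F21, F01F10]; simp
  rw [h]; module
theorem F01F32 : ⁅g.F01, g.F32⁆ = 0 := by
  have h : (3 : ℂ) • ⁅g.F01, g.F32⁆ = 0 := by
    rw [← lie_smul, ← F11F21, leibniz_lie, F01F21, F01F11]; simp
  exact (smul_eq_zero.1 h).resolve_left (by norm_num)
theorem F10F32 : ⁅g.F10, g.F32⁆ = 0 := by
  have h1 : ⁅g.F10, g.F32⁆ = -⁅g.F11, g.F31⁆ := by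
    rw [F32, leibniz_lie, F10F31, F10F01]; simp
  have h : (3 : ℂ) • ⁅g.F10, g.F32⁆ = (-3 : ℂ) • ⁅g.F10, g.F32⁆ := by
    rw [← lie_smul, ← F11F21, leibniz_lie, F10F21, F10F11, h1, smul_lie, lie_self,
      lie_smul]; module
  have h2 : (6 : ℂ) • ⁅g.F10, g.F32⁆ = 0 := by
    rw [← sub_eq_zero] at h; rw [← h]; module
  exact (smul_eq_zero.1 h2).resolve_left (by norm_num)

-- the remaining brackets of F10, F01 with the positive root vectors
theorem F10E11 : ⁅g.F10, g.E11⁆ = (3 : ℂ) • g.E01 := by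
  rw [E11, leibniz_lie, F10E10, F10E01, neg_lie, g.hH10E01, lie_zero]; module
theorem F01E11 : ⁅g.F01, g.E11⁆ = -g.E10 := by
  rw [E11, leibniz_lie, F01E10, F01E01, lie_neg, E10H01, zero_lie]; module
theorem H10E11 : ⁅g.H10, g.E11⁆ = -g.E11 := by
  rw [E11, leibniz_lie, g.hH10E10, g.hH10E01, smul_lie, lie_smul]; module
theorem H01E11 : ⁅g.H01, g.E11⁆ = g.E11 := by
  rw [E11, leibniz_lie, g.hH01E10, g.hH01E01, smul_lie, lie_smul]; module
theorem F10E21 : ⁅g.F10, g.E21⁆ = (-2 : ℂ) • g.E11 := by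
  rw [E21, lie_smul, leibniz_lie, F10E11, F10E10, smul_lie, E01E10, lie_neg,
    lie_flip g.H10E11]; module
theorem F01E21 : ⁅g.F01, g.E21⁆ = 0 := by
  rw [E21, lie_smul, leibniz_lie, F01E11, F01E10, neg_lie, lie_self]; simp
theorem H10E21 : ⁅g.H10, g.E21⁆ = g.E21 := by
  rw [E21, lie_smul, leibniz_lie, H10E11, g.hH10E10, neg_lie, lie_smul]; module
theorem H01E21 : ⁅g.H01, g.E21⁆ = 0 := by
  rw [E21, lie_smul, leibniz_lie, H01E11, g.hH01E10, lie_smul]; module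
theorem F10E31 : ⁅g.F10, g.E31⁆ = -g.E21 := by
  rw [E31, lie_smul, leibniz_lie, F10E21, F10E10, smul_lie, E11E10, lie_neg,
    lie_flip g.H10E21]; module
theorem F01E31 : ⁅g.F01, g.E31⁆ = 0 := by
  rw [E31, lie_smul, leibniz_lie, F01E21, F01E10]; simp
theorem H10E31 : ⁅g.H10, g.E31⁆ = (3 : ℂ) • g.E31 := by
  rw [E31, lie_smul, leibniz_lie, H10E21, g.hH10E10, lie_smul]; module
theorem H01E31 : ⁅g.H01, g.E31⁆ = -g.E31 := by
  rw [E31, lie_smul, leibniz_lie, H01E21, g.hH01E10, lie_smul, zero_lie]; module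
theorem F10E32 : ⁅g.F10, g.E32⁆ = 0 := by
  rw [E32, leibniz_lie, F10E31, F10E01, neg_lie, lie_flip g.E01E21]; simp
theorem F01E32 : ⁅g.F01, g.E32⁆ = -g.E31 := by
  rw [E32, leibniz_lie, F01E31, F01E01, lie_neg, lie_flip g.H01E31]; simp
theorem H10E32 : ⁅g.H10, g.E32⁆ = 0 := by
  rw [E32, leibniz_lie, H10E31, g.hH10E01, smul_lie, lie_smul]; module
theorem H01E32 : ⁅g.H01, g.E32⁆ = g.E32 := by
  rw [E32, leibniz_lie, H01E31, g.hH01E01, neg_lie, lie_smul]; module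
-- weights of the negative root vectors
theorem H10F11 : ⁅g.H10, g.F11⁆ = g.F11 := by
  rw [F11, leibniz_lie, g.hH10F10, g.hH10F01, smul_lie, lie_smul]; module
theorem H01F11 : ⁅g.H01, g.F11⁆ = -g.F11 := by
  rw [F11, leibniz_lie, g.hH01F10, g.hH01F01, smul_lie, lie_smul]; module
theorem H10F21 : ⁅g.H10, g.F21⁆ = -g.F21 := by
  rw [F21, lie_smul, leibniz_lie, H10F11, g.hH10F10, smul_lie]; module
theorem H01F21 : ⁅g.H01, g.F21⁆ = 0 := by
  rw [F21, lie_smul, leibniz_lie, H01F11, g.hH01F10, smul_lie, lie_neg]; module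
theorem H10F31 : ⁅g.H10, g.F31⁆ = (-3 : ℂ) • g.F31 := by
  rw [F31, lie_smul, leibniz_lie, H10F21, g.hH10F10, smul_lie, lie_neg]; module
theorem H01F31 : ⁅g.H01, g.F31⁆ = g.F31 := by
  rw [F31, lie_smul, leibniz_lie, H01F21, g.hH01F10, smul_lie, lie_zero]; module
theorem H10F32 : ⁅g.H10, g.F32⁆ = 0 := by
  rw [F32, leibniz_lie, H10F31, g.hH10F01, smul_lie, lie_smul]; module
theorem H01F32 : ⁅g.H01, g.F32⁆ = -g.F32 := by
  rw [F32, leibniz_lie, H01F31, g.hH01F01, smul_lie]; module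

end G2Gens
namespace G2Gens
variable {L : Type*} [LieRing L] [LieAlgebra ℂ L] (g : G2Gens L)

-- brackets of F11
theorem F11_lie (x : L) : ⁅g.F11, x⁆ = ⁅g.F01, ⁅g.F10, x⁆⁆ - ⁅g.F10, ⁅g.F01, x⁆⁆ := by
  rw [F11, lie_lie]
theorem F21_lie (x : L) :
    ⁅g.F21, x⁆ = (2 : ℂ)⁻¹ • (⁅g.F10, ⁅g.F11, x⁆⁆ - ⁅g.F11, ⁅g.F10, x⁆⁆) := by
  rw [F21, smul_lie, lie_lie]
theorem F31_lie (x : L) :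
    ⁅g.F31, x⁆ = (3 : ℂ)⁻¹ • (⁅g.F10, ⁅g.F21, x⁆⁆ - ⁅g.F21, ⁅g.F10, x⁆⁆) := by
  rw [F31, smul_lie, lie_lie]
theorem F32_lie (x : L) : ⁅g.F32, x⁆ = ⁅g.F01, ⁅g.F31, x⁆⁆ - ⁅g.F31, ⁅g.F01, x⁆⁆ := by
  rw [F32, lie_lie]

theorem F11E10 : ⁅g.F11, g.E10⁆ = (3 : ℂ) • g.F01 := by
  simp only [F11_lie, F10E10, F01E10, lie_neg, lie_zero, F01H10]; module
theorem F11E01 : ⁅g.F11, g.E01⁆ = -g.F10 := by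
  simp only [F11_lie, F10E01, F01E01, lie_neg, lie_zero, F10H01]; module
theorem F11E11 : ⁅g.F11, g.E11⁆ = -g.H11 := by
  simp only [F11_lie, F10E11, F01E11, lie_neg, lie_smul, F01E01, F10E10, H11]; module
theorem F11E21 : ⁅g.F11, g.E21⁆ = (2 : ℂ) • g.E10 := by
  simp only [F11_lie, F10E21, F01E21, lie_zero, lie_smul, F01E11]; module
theorem F11E31 : ⁅g.F11, g.E31⁆ = 0 := by
  simp only [F11_lie, F10E31, F01E31, lie_zero, lie_neg, F01E21]; simp
theorem F11E32 : ⁅g.F11, g.E32⁆ = -g.E21 := by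
  simp only [F11_lie, F10E32, F01E32, lie_zero, lie_neg, F10E31]; simp
theorem F11H10 : ⁅g.F11, g.H10⁆ = -g.F11 := lie_flip g.H10F11
theorem F11H01 : ⁅g.F11, g.H01⁆ = g.F11 := by rw [lie_flip g.H01F11, neg_neg]
theorem F11F10 : ⁅g.F11, g.F10⁆ = (-2 : ℂ) • g.F21 := by
  rw [lie_flip g.F10F11]; module
theorem F11F01 : ⁅g.F11, g.F01⁆ = 0 := by rw [lie_flip g.F01F11, neg_zero]
theorem F11F31 : ⁅g.F11, g.F31⁆ = 0 := by
  simp only [F11_lie, F10F31, F01F31, F10F32, lie_zero, sub_zero]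
theorem F11F32 : ⁅g.F11, g.F32⁆ = 0 := by
  simp only [F11_lie, F10F32, F01F32, lie_zero, sub_zero]

-- brackets of F21
theorem F21E10 : ⁅g.F21, g.E10⁆ = (-2 : ℂ) • g.F11 := by
  simp only [F21_lie, F11E10, F10E10, lie_neg, lie_smul, F10F01, F11H10]; module
theorem F21E01 : ⁅g.F21, g.E01⁆ = 0 := by
  simp only [F21_lie, F11E01, F10E01, lie_zero, lie_neg, lie_self]; simp
theorem F21E11 : ⁅g.F21, g.E11⁆ = (2 : ℂ) • g.F10 := by
  simp only [F21_lie, F11E11, F10E11, H11, lie_neg, lie_add, lie_smul, F10H10, F10H01,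
    F11E01]; module
theorem F21E21 : ⁅g.F21, g.E21⁆ = -g.H21 := by
  simp only [F21_lie, F11E21, F10E21, H21, lie_smul, F10E10, F11E11, H11]; module
theorem F21E31 : ⁅g.F21, g.E31⁆ = g.E10 := by
  simp only [F21_lie, F11E31, F10E31, lie_neg, lie_zero, F11E21]; module
theorem F21E32 : ⁅g.F21, g.E32⁆ = g.E11 := by
  simp only [F21_lie, F11E32, F10E32, lie_neg, lie_zero, F10E21]; module
theorem F21H10 : ⁅g.F21, g.H10⁆ = g.F21 := by rw [lie_flip g.H10F21, neg_neg]
theorem F21H01 : ⁅g.F21, g.H01⁆ = 0 := by rw [lie_flip g.H01F21, neg_zero]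
theorem F21F10 : ⁅g.F21, g.F10⁆ = (-3 : ℂ) • g.F31 := by
  rw [lie_flip g.F10F21]; module
theorem F21F01 : ⁅g.F21, g.F01⁆ = 0 := by rw [lie_flip g.F01F21, neg_zero]
theorem F21F11 : ⁅g.F21, g.F11⁆ = (-3 : ℂ) • g.F32 := by
  rw [lie_flip g.F11F21]; module
theorem F21F31 : ⁅g.F21, g.F31⁆ = 0 := by
  simp only [F21_lie, F11F31, F10F31, lie_zero]; simp
theorem F21F32 : ⁅g.F21, g.F32⁆ = 0 := by
  simp only [F21_lie, F11F32, F10F32, lie_zero]; simp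

-- brackets of F31
theorem F31E10 : ⁅g.F31, g.E10⁆ = -g.F21 := by
  simp only [F31_lie, F21E10, F10E10, lie_smul, lie_neg, F10F11, F21H10]; module
theorem F31E01 : ⁅g.F31, g.E01⁆ = 0 := by
  simp only [F31_lie, F21E01, F10E01, lie_zero]; simp
theorem F31E11 : ⁅g.F31, g.E11⁆ = 0 := by
  simp only [F31_lie, F21E11, F10E11, lie_smul, lie_self, F21E01]; simp
theorem F31E21 : ⁅g.F31, g.E21⁆ = g.F10 := by
  simp only [F31_lie, F21E21, F10E21, lie_smul, lie_neg, H21, lie_add, F10H10, F10H01,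
    F21E11]; module
theorem F31E31 : ⁅g.F31, g.E31⁆ = -g.H31 := by
  simp only [F31_lie, F21E31, F10E31, lie_neg, F10E10, F21E21, H21, H31]; module
theorem F31E32 : ⁅g.F31, g.E32⁆ = g.E01 := by
  simp only [F31_lie, F21E32, F10E32, lie_zero, F10E11]; module
theorem F31H10 : ⁅g.F31, g.H10⁆ = (3 : ℂ) • g.F31 := by
  rw [lie_flip g.H10F31]; module
theorem F31H01 : ⁅g.F31, g.H01⁆ = -g.F31 := lie_flip g.H01F31
theorem F31F10 : ⁅g.F31, g.F10⁆ = 0 := by rw [lie_flip g.F10F31, neg_zero]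
theorem F31F01 : ⁅g.F31, g.F01⁆ = -g.F32 := lie_flip g.F01F31
theorem F31F21 : ⁅g.F31, g.F21⁆ = 0 := by rw [lie_flip g.F21F31, neg_zero]
theorem F31F32 : ⁅g.F31, g.F32⁆ = 0 := by
  simp only [F31_lie, F21F32, F10F32, lie_zero]; simp

-- brackets of F32
theorem F32E10 : ⁅g.F32, g.E10⁆ = 0 := by
  simp only [F32_lie, F31E10, F01E10, lie_zero, lie_neg, F01F21]; simp
theorem F32E01 : ⁅g.F32, g.E01⁆ = -g.F31 := by
  simp only [F32_lie, F31E01, F01E01, lie_zero, lie_neg, F31H01]; simp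
theorem F32E11 : ⁅g.F32, g.E11⁆ = -g.F21 := by
  simp only [F32_lie, F31E11, F01E11, lie_zero, lie_neg, F31E10]; simp
theorem F32E21 : ⁅g.F32, g.E21⁆ = g.F11 := by
  simp only [F32_lie, F31E21, F01E21, lie_zero, F01F10]; simp
theorem F32E31 : ⁅g.F32, g.E31⁆ = g.F01 := by
  simp only [F32_lie, F31E31, F01E31, lie_zero, lie_neg, H31, lie_add, F01H10, F01H01]; module
theorem F32E32 : ⁅g.F32, g.E32⁆ = -g.H32 := by
  simp only [F32_lie, F31E32, F01E32, lie_neg, F01E01, F31E31, H31, H32]; module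
theorem F32H10 : ⁅g.F32, g.H10⁆ = 0 := by rw [lie_flip g.H10F32, neg_zero]
theorem F32H01 : ⁅g.F32, g.H01⁆ = g.F32 := by rw [lie_flip g.H01F32, neg_neg]
theorem F32F01 : ⁅g.F32, g.F01⁆ = 0 := by rw [lie_flip g.F01F32, neg_zero]
theorem F32F11 : ⁅g.F32, g.F11⁆ = 0 := by rw [lie_flip g.F11F32, neg_zero]
theorem F32F21 : ⁅g.F32, g.F21⁆ = 0 := by rw [lie_flip g.F21F32, neg_zero]
theorem F32F31 : ⁅g.F32, g.F31⁆ = 0 := by rw [lie_flip g.F31F32, neg_zero]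

end G2Gens
section Env
variable {L : Type*} [LieRing L] [LieAlgebra ℂ L]

local notation "𝓤" => UniversalEnvelopingAlgebra ℂ L

theorem ιU_add (x y : L) : ιU (x + y) = ιU x + ιU y := map_add (UniversalEnvelopingAlgebra.ι ℂ) x y
theorem ιU_smul (c : ℂ) (x : L) : ιU (c • x) = c • ιU x :=
  map_smul (UniversalEnvelopingAlgebra.ι ℂ) c x
theorem ιU_neg (x : L) : ιU (-x) = -ιU x := map_neg (UniversalEnvelopingAlgebra.ι ℂ) x
theorem ιU_zero : ιU (0 : L) = 0 := map_zero (UniversalEnvelopingAlgebra.ι ℂ)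
attribute [local instance] LieRing.ofAssociativeRing in
theorem ιU_lie (x y : L) : ιU ⁅x, y⁆ = ιU x * ιU y - ιU y * ιU x :=
  LieHom.map_lie (UniversalEnvelopingAlgebra.ι ℂ) x y

theorem adU_ι (x y : L) : adU x (ιU y) = ιU ⁅x, y⁆ := (ιU_lie x y).symm
theorem adU_add (x : L) (u v : 𝓤) : adU x (u + v) = adU x u + adU x v := by
  simp only [adU]; noncomm_ring
theorem adU_sub (x : L) (u v : 𝓤) : adU x (u - v) = adU x u - adU x v := by
  simp only [adU]; noncomm_ring
theorem adU_smul (x : L) (c : ℂ) (u : 𝓤) : adU x (c • u) = c • adU x u := by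
  simp only [adU, mul_smul_comm, smul_mul_assoc, smul_sub]
theorem adU_mul (x : L) (u v : 𝓤) : adU x (u * v) = adU x u * v + u * adU x v := by
  simp only [adU]; noncomm_ring
theorem adU_zero (x : L) : adU x (0 : 𝓤) = 0 := by simp [adU]
theorem adU_one (x : L) : adU x (1 : 𝓤) = 0 := by simp [adU]

theorem adU_iter_smul (x : L) (c : ℂ) (u : 𝓤) (n : ℕ) :
    (adU x)^[n] (c • u) = c • (adU x)^[n] u := by
  induction n generalizing u with
  | zero => rfl
  | succ n ih => rw [Function.iterate_succ_apply, Function.iterate_succ_apply, adU_smul, ih]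
theorem adU_iter_add (x : L) (u v : 𝓤) (n : ℕ) :
    (adU x)^[n] (u + v) = (adU x)^[n] u + (adU x)^[n] v := by
  induction n generalizing u v with
  | zero => rfl
  | succ n ih => simp only [Function.iterate_succ_apply, adU_add, ih]

/-- `DivTop φ k x t`: `t` is the `k`-th divided power of `ad φ` applied to `x`, and it is killed by
`ad φ`. -/
def DivTop (φ : L) (k : ℕ) (x t : 𝓤) : Prop :=
  (adU φ)^[k] x = (k.factorial : ℂ) • t ∧ adU φ t = 0

theorem DivTop.zero {φ : L} {x : 𝓤} (h : adU φ x = 0) : DivTop φ 0 x x := ⟨by simp, h⟩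

theorem DivTop.zero_eq {φ : L} {x t : 𝓤} (h : DivTop φ 0 x t) : x = t := by simpa using h.1

theorem DivTop.step {φ : L} {k : ℕ} {x t : 𝓤} (h : DivTop φ k (adU φ x) (((k + 1 : ℕ) : ℂ) • t)) :
    DivTop φ (k + 1) x t := by
  obtain ⟨h1, h2⟩ := h
  refine ⟨?_, ?_⟩
  · rw [Function.iterate_succ_apply, h1, smul_smul, Nat.factorial_succ]
    push_cast; rw [mul_comm]
  · rw [adU_smul] at h2
    exact (smul_eq_zero.1 h2).resolve_left (by exact_mod_cast Nat.succ_ne_zero k)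

theorem DivTop.unstep {φ : L} {k : ℕ} {x t : 𝓤} (h : DivTop φ (k + 1) x t) :
    DivTop φ k (adU φ x) (((k + 1 : ℕ) : ℂ) • t) := by
  obtain ⟨h1, h2⟩ := h
  refine ⟨?_, by rw [adU_smul, h2, smul_zero]⟩
  rw [← Function.iterate_succ_apply, h1, smul_smul, Nat.factorial_succ]
  push_cast; rw [mul_comm]

theorem DivTop.add {φ : L} {k : ℕ} {x y t u : 𝓤} (h : DivTop φ k x t) (h' : DivTop φ k y u) :
    DivTop φ k (x + y) (t + u) :=
  ⟨by rw [adU_iter_add, h.1, h'.1, smul_add], by rw [adU_add, h.2, h'.2, add_zero]⟩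

theorem DivTop.smul {φ : L} {k : ℕ} {x t : 𝓤} (c : ℂ) (h : DivTop φ k x t) :
    DivTop φ k (c • x) (c • t) :=
  ⟨by rw [adU_iter_smul, h.1, smul_comm], by rw [adU_smul, h.2, smul_zero]⟩

theorem DivTop.sub {φ : L} {k : ℕ} {x y t u : 𝓤} (h : DivTop φ k x t) (h' : DivTop φ k y u) :
    DivTop φ k (x - y) (t - u) := by
  simpa [sub_eq_add_neg] using h.add (h'.smul (-1))

/-- If the divided power of order `k + 1` vanishes, then `x` already has a top of order `k`. -/
theorem DivTop.drop {φ : L} {k : ℕ} {x : 𝓤} (h : DivTop φ (k + 1) x 0) : ∃ t, DivTop φ k x t := by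
  have h1 := h.1
  rw [smul_zero, Function.iterate_succ_apply'] at h1
  have hk : (k.factorial : ℂ) ≠ 0 := by exact_mod_cast k.factorial_ne_zero
  exact ⟨(k.factorial : ℂ)⁻¹ • (adU φ)^[k] x, by rw [smul_smul, mul_inv_cancel₀ hk, one_smul],
    by rw [adU_smul, h1, smul_zero]⟩

theorem DivTop.of_zero {φ : L} {k : ℕ} {x : 𝓤} (h : DivTop φ k x 0) (j : ℕ) : DivTop φ (k + j) x 0 := by
  refine ⟨?_, adU_zero φ⟩
  rw [add_comm, Function.iterate_add_apply, h.1, smul_zero, smul_zero]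
  exact Function.iterate_fixed (adU_zero φ) j

theorem DivTop.up {φ : L} {k : ℕ} {x t : 𝓤} (h : DivTop φ k x t) : DivTop φ (k + 1) x 0 := by
  refine ⟨?_, adU_zero φ⟩
  rw [Function.iterate_succ_apply', h.1, adU_smul, h.2, smul_zero, smul_zero]

theorem DivTop.mul {φ : L} {k l : ℕ} {x y t u : 𝓤} (h : DivTop φ k x t) (h' : DivTop φ l y u) :
    DivTop φ (k + l) (x * y) (t * u) := by
  induction hN : k + l generalizing k l x y t u with
  | zero =>
    obtain ⟨rfl, rfl⟩ : k = 0 ∧ l = 0 := by omega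
    rw [h.zero_eq, h'.zero_eq]
    exact DivTop.zero (by rw [adU_mul, h.2, h'.2]; simp)
  | succ N ih =>
    apply DivTop.step
    rw [adU_mul]
    have e1 : DivTop φ N (adU φ x * y) ((k : ℂ) • (t * u)) := by
      rcases k with _ | k
      · rw [h.zero_eq, h.2]; simp only [zero_mul, Nat.cast_zero, zero_smul]
        simpa using ((DivTop.zero (φ := φ) (adU_zero φ)).of_zero N)
      · have := ih h.unstep h' (by omega)
        rwa [smul_mul_assoc] at this
    have e2 : DivTop φ N (x * adU φ y) ((l : ℂ) • (t * u)) := by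
      rcases l with _ | l
      · rw [h'.zero_eq, h'.2]; simp only [mul_zero, Nat.cast_zero, zero_smul]
        simpa using ((DivTop.zero (φ := φ) (adU_zero φ)).of_zero N)
      · have := ih h h'.unstep (by omega)
        rwa [mul_smul_comm] at this
    have e := e1.add e2
    rw [← add_smul] at e
    rw [← hN]; push_cast; exact e

theorem DivTop.pow {φ : L} {k : ℕ} {x t : 𝓤} (h : DivTop φ k x t) (r : ℕ) :
    DivTop φ (k * r) (x ^ r) (t ^ r) := by
  induction r with
  | zero => simpa using DivTop.zero (adU_one φ)
  | succ r ih => rw [pow_succ, pow_succ, Nat.mul_succ]; exact ih.mul h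

/-- `sl₂` commutation. -/
theorem sl2_comm {e f h : L} (h1 : ⁅e, f⁆ = h) (h2 : ⁅h, e⁆ = (2 : ℂ) • e) (n : ℕ) :
    ιU e ^ (n + 1) * ιU f = ιU f * ιU e ^ (n + 1)
      + ((n : ℂ) + 1) • ((ιU h - (n : ℂ) • 1) * ιU e ^ n) := by
  have k1 : ιU e * ιU f = ιU f * ιU e + ιU h := by rw [← h1, ιU_lie]; abel
  have k2 : ιU e * ιU h = ιU h * ιU e - (2 : ℂ) • ιU e := by
    rw [← ιU_smul, ← h2, ιU_lie]; abel
  induction n with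
  | zero => simp [k1]
  | succ n ih =>
    rw [pow_succ' _ (n + 1), mul_assoc, ih, mul_add, ← mul_assoc, k1, mul_smul_comm, ← mul_assoc,
      mul_sub, k2, mul_smul_comm, mul_one]
    simp only [add_mul, sub_mul, smul_mul_assoc, mul_assoc, ← pow_succ', one_mul]
    push_cast
    module

end Env
section Env2
variable {L : Type*} [LieRing L] [LieAlgebra ℂ L]

local notation "𝓤" => UniversalEnvelopingAlgebra ℂ L

/-- `x` has weight `k` with respect to `ad h`. -/
def HasWt (h : L) (k : ℂ) (x : 𝓤) : Prop := adU h x = k • x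

theorem HasWt.mul {h : L} {k l : ℂ} {x y : 𝓤} (hx : HasWt h k x) (hy : HasWt h l y) :
    HasWt h (k + l) (x * y) := by
  unfold HasWt at *
  rw [adU_mul, hx, hy, smul_mul_assoc, mul_smul_comm, add_smul]

theorem HasWt.one (h : L) : HasWt h 0 (1 : 𝓤) := by
  unfold HasWt; rw [adU_one, zero_smul]

theorem HasWt.pow {h : L} {k : ℂ} {x : 𝓤} (hx : HasWt h k x) (n : ℕ) :
    HasWt h (n * k) (x ^ n) := by
  induction n with
  | zero => simpa using HasWt.one h
  | succ n ih =>
    rw [pow_succ]; convert ih.mul hx using 1; push_cast; ring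

theorem HasWt.sub {h : L} {k : ℂ} {x y : 𝓤} (hx : HasWt h k x) (hy : HasWt h k y) :
    HasWt h k (x - y) := by
  unfold HasWt at *
  rw [adU_sub, hx, hy, smul_sub]

theorem HasWt.of_lie {h x : L} {k : ℂ} (hx : ⁅h, x⁆ = k • x) : HasWt h k (ιU x) := by
  unfold HasWt; rw [adU_ι, hx, ιU_smul]

theorem HasWt.adU {h x : L} {k l : ℂ} {u : 𝓤} (hx : ⁅h, x⁆ = k • x) (hu : HasWt h l u) :
    HasWt h (k + l) (adU x u) := by
  have hx' := HasWt.of_lie hx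
  have h2 := hu.mul hx'
  rw [add_comm] at h2
  exact (hx'.mul hu).sub h2

theorem HasWt.adU_iter {h x : L} {k l : ℂ} {u : 𝓤} (hx : ⁅h, x⁆ = k • x) (hu : HasWt h l u)
    (n : ℕ) : HasWt h (n * k + l) ((_root_.adU x)^[n] u) := by
  induction n with
  | zero => simpa using hu
  | succ n ih =>
    rw [Function.iterate_succ_apply']
    convert HasWt.adU hx ih using 1; push_cast; ring

/-- `ad h` as a linear endomorphism. -/
noncomputable def adLin (h : L) : Module.End ℂ 𝓤 where
  toFun := adU h
  map_add' := adU_add h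
  map_smul' := adU_smul h

theorem adLin_apply (h : L) (u : 𝓤) : adLin h u = adU h u := rfl

/-- Elements of `U` generated by `ι L` as an algebra: induction principle. -/
theorem U_adjoin : Algebra.adjoin ℂ (Set.range (ιU : L → 𝓤)) = ⊤ := by
  have key : ∀ z : TensorAlgebra ℂ L, UniversalEnvelopingAlgebra.mkAlgHom ℂ L z ∈
      Algebra.adjoin ℂ (Set.range (ιU : L → 𝓤)) := by
    intro z
    induction z using TensorAlgebra.induction with
    | algebraMap r => rw [AlgHom.commutes]; exact Subalgebra.algebraMap_mem _ r
    | ι x => exact Algebra.subset_adjoin ⟨x, rfl⟩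
    | mul a b ha hb => rw [map_mul]; exact mul_mem ha hb
    | add a b ha hb => rw [map_add]; exact add_mem ha hb
  rw [eq_top_iff]
  intro x _
  obtain ⟨z, rfl⟩ : ∃ z, UniversalEnvelopingAlgebra.mkAlgHom ℂ L z = x :=
    Quot.exists_rep x
  exact key z

end Env2

namespace G2Gens
variable {L : Type*} [LieRing L] [LieAlgebra ℂ L] (g : G2Gens L)

local notation "𝓤" => UniversalEnvelopingAlgebra ℂ L

/-- The left ideal `U n₊`. -/
noncomputable def nIdeal : Ideal 𝓤 := Ideal.span {ιU g.E10, ιU g.E01}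

theorem eqModN_of_mem {x y : 𝓤} (h : x - y ∈ g.nIdeal) : g.EqModN x y := by
  obtain ⟨a, b, hab⟩ := Ideal.mem_span_pair.1 h
  exact ⟨a, b, hab.symm⟩

theorem E10_mem : ιU g.E10 ∈ g.nIdeal := Ideal.subset_span (by simp)
theorem E01_mem : ιU g.E01 ∈ g.nIdeal := Ideal.subset_span (by simp)
theorem nIdeal_smul {x : 𝓤} (c : ℂ) (h : x ∈ g.nIdeal) : c • x ∈ g.nIdeal :=
  Submodule.smul_of_tower_mem _ c h

theorem lie_mem_nIdeal {x y : L} (hx : ιU x ∈ g.nIdeal) (hy : ιU y ∈ g.nIdeal) :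
    ιU ⁅x, y⁆ ∈ g.nIdeal := by
  rw [ιU_lie]; exact sub_mem (Ideal.mul_mem_left _ _ hy) (Ideal.mul_mem_left _ _ hx)

theorem E11_mem : ιU g.E11 ∈ g.nIdeal := g.lie_mem_nIdeal g.E10_mem g.E01_mem
theorem E21_mem : ιU g.E21 ∈ g.nIdeal := by
  rw [E21, ιU_smul]; exact g.nIdeal_smul _ (g.lie_mem_nIdeal g.E11_mem g.E10_mem)

/-- The grading element. -/
noncomputable def ht : L := (3 : ℂ) • g.H10 + (5 : ℂ) • g.H01

theorem htE10 : ⁅g.ht, g.E10⁆ = (1 : ℂ) • g.E10 := by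
  rw [ht, add_lie, smul_lie, smul_lie, hH10E10, hH01E10]; module
theorem htE01 : ⁅g.ht, g.E01⁆ = (1 : ℂ) • g.E01 := by
  rw [ht, add_lie, smul_lie, smul_lie, hH10E01, hH01E01]; module
theorem htF10 : ⁅g.ht, g.F10⁆ = (-1 : ℂ) • g.F10 := by
  rw [ht, add_lie, smul_lie, smul_lie, hH10F10, hH01F10]; module
theorem htF01 : ⁅g.ht, g.F01⁆ = (-1 : ℂ) • g.F01 := by
  rw [ht, add_lie, smul_lie, smul_lie, hH10F01, hH01F01]; module
theorem htH10 : ⁅g.ht, g.H10⁆ = (0 : ℂ) • g.H10 := by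
  rw [ht, add_lie, smul_lie, smul_lie, lie_self, lie_flip g.hH10H01]; simp
theorem htH01 : ⁅g.ht, g.H01⁆ = (0 : ℂ) • g.H01 := by
  rw [ht, add_lie, smul_lie, smul_lie, lie_self, hH10H01]; simp

/-- Monomials in the negative Borel subalgebra. -/
inductive NegMon : 𝓤 → Prop
  | one : NegMon 1
  | F10 {x : 𝓤} : NegMon x → NegMon (ιU g.F10 * x)
  | F01 {x : 𝓤} : NegMon x → NegMon (ιU g.F01 * x)
  | H10 {x : 𝓤} : NegMon x → NegMon (ιU g.H10 * x)
  | H01 {x : 𝓤} : NegMon x → NegMon (ιU g.H01 * x)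

theorem NegMon.wt {x : 𝓤} (hx : g.NegMon x) : ∃ k : ℕ, HasWt g.ht (-(k : ℂ)) x := by
  induction hx with
  | one => exact ⟨0, by simpa using HasWt.one _⟩
  | F10 _ ih =>
    obtain ⟨k, hk⟩ := ih
    exact ⟨k + 1, by convert (HasWt.of_lie g.htF10).mul hk using 1; push_cast; ring⟩
  | F01 _ ih =>
    obtain ⟨k, hk⟩ := ih
    exact ⟨k + 1, by convert (HasWt.of_lie g.htF01).mul hk using 1; push_cast; ring⟩
  | H10 _ ih =>
    obtain ⟨k, hk⟩ := ih
    exact ⟨k, by convert (HasWt.of_lie g.htH10).mul hk using 1; ring⟩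
  | H01 _ ih =>
    obtain ⟨k, hk⟩ := ih
    exact ⟨k, by convert (HasWt.of_lie g.htH01).mul hk using 1; ring⟩

/-- `U(b₋) + U n₊`. -/
noncomputable def triSub : Submodule ℂ 𝓤 :=
  Submodule.span ℂ {x | g.NegMon x} ⊔ g.nIdeal.restrictScalars ℂ

theorem mem_triSub_of_negMon {x : 𝓤} (h : g.NegMon x) : x ∈ g.triSub :=
  Submodule.mem_sup_left (Submodule.subset_span h)
theorem mem_triSub_of_ideal {x : 𝓤} (h : x ∈ g.nIdeal) : x ∈ g.triSub :=
  Submodule.mem_sup_right h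

/-- Left multiplication preserves `triSub` if it does so on monomials. -/
theorem triSub_mul {u : 𝓤} (h : ∀ x, g.NegMon x → u * x ∈ g.triSub) :
    ∀ x ∈ g.triSub, u * x ∈ g.triSub := by
  intro x hx
  obtain ⟨y, hy, z, hz, rfl⟩ := Submodule.mem_sup.1 hx
  rw [mul_add]
  refine add_mem ?_ (g.mem_triSub_of_ideal (Ideal.mul_mem_left _ _ hz))
  induction hy using Submodule.span_induction with
  | mem y hy => exact h y hy
  | zero => simp
  | add a b _ _ ha hb =>
    rw [mul_add]
    exact add_mem (ha (g.triSub.add_mem (by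
      exact Submodule.mem_sup_left (by assumption)) (Submodule.mem_sup_right hz)))
      (hb (g.triSub.add_mem (Submodule.mem_sup_left (by assumption)) (Submodule.mem_sup_right hz)))
  | smul c a _ ha =>
    rw [mul_smul_comm]
    exact Submodule.smul_mem _ _ (ha (g.triSub.add_mem (Submodule.mem_sup_left (by assumption))
      (Submodule.mem_sup_right hz)))

theorem triSub_F10 : ∀ x ∈ g.triSub, ιU g.F10 * x ∈ g.triSub :=
  g.triSub_mul fun _ hx => g.mem_triSub_of_negMon hx.F10
theorem triSub_F01 : ∀ x ∈ g.triSub, ιU g.F01 * x ∈ g.triSub :=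
  g.triSub_mul fun _ hx => g.mem_triSub_of_negMon hx.F01
theorem triSub_H10 : ∀ x ∈ g.triSub, ιU g.H10 * x ∈ g.triSub :=
  g.triSub_mul fun _ hx => g.mem_triSub_of_negMon hx.H10
theorem triSub_H01 : ∀ x ∈ g.triSub, ιU g.H01 * x ∈ g.triSub :=
  g.triSub_mul fun _ hx => g.mem_triSub_of_negMon hx.H01

theorem swap_mul {x y z : L} (h : ⁅x, y⁆ = z) (u : 𝓤) :
    ιU x * (ιU y * u) = ιU y * (ιU x * u) + ιU z * u := by
  rw [← h, ιU_lie]; noncomm_ring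

theorem triSub_E_aux {x : 𝓤} (hx : g.NegMon x) :
    ιU g.E10 * x ∈ g.triSub ∧ ιU g.E01 * x ∈ g.triSub := by
  induction hx with
  | one =>
    simp only [mul_one]
    exact ⟨g.mem_triSub_of_ideal g.E10_mem, g.mem_triSub_of_ideal g.E01_mem⟩
  | @F10 x hx ih =>
    rw [swap_mul g.hE10F10, swap_mul g.hE01F10, ιU_zero, zero_mul, add_zero]
    exact ⟨add_mem (g.triSub_F10 _ ih.1) (g.mem_triSub_of_negMon hx.H10), g.triSub_F10 _ ih.2⟩
  | @F01 x hx ih =>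
    rw [swap_mul g.hE10F01, swap_mul g.hE01F01, ιU_zero, zero_mul, add_zero]
    exact ⟨g.triSub_F01 _ ih.1, add_mem (g.triSub_F01 _ ih.2) (g.mem_triSub_of_negMon hx.H01)⟩
  | @H10 x hx ih =>
    rw [swap_mul g.E10H10, swap_mul g.E01H10, ιU_smul, ιU_smul, smul_mul_assoc, smul_mul_assoc]
    exact ⟨add_mem (g.triSub_H10 _ ih.1) (Submodule.smul_mem _ _ ih.1),
      add_mem (g.triSub_H10 _ ih.2) (Submodule.smul_mem _ _ ih.2)⟩
  | @H01 x hx ih =>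
    rw [swap_mul g.E10H01, swap_mul g.E01H01, ιU_smul, ιU_smul, smul_mul_assoc, smul_mul_assoc]
    exact ⟨add_mem (g.triSub_H01 _ ih.1) (Submodule.smul_mem _ _ ih.1),
      add_mem (g.triSub_H01 _ ih.2) (Submodule.smul_mem _ _ ih.2)⟩

theorem triSub_ι (x : L) : ∀ u ∈ g.triSub, ιU x * u ∈ g.triSub := by
  have hx : x ∈ LieSubalgebra.lieSpan ℂ L {g.E10, g.E01, g.F10, g.F01, g.H10, g.H01} := by
    rw [g.generates]; trivial
  induction hx using LieSubalgebra.lieSpan_induction with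
  | mem x h =>
    simp only [Set.mem_insert_iff, Set.mem_singleton_iff] at h
    rcases h with rfl | rfl | rfl | rfl | rfl | rfl
    · exact g.triSub_mul fun _ h => (g.triSub_E_aux h).1
    · exact g.triSub_mul fun _ h => (g.triSub_E_aux h).2
    · exact g.triSub_F10
    · exact g.triSub_F01
    · exact g.triSub_H10
    · exact g.triSub_H01
  | zero => intro u _; rw [ιU_zero, zero_mul]; exact zero_mem _
  | add x y _ _ hx hy =>
    intro u hu; rw [ιU_add, add_mul]; exact add_mem (hx u hu) (hy u hu)
  | smul c x _ hx =>
    intro u hu; rw [ιU_smul, smul_mul_assoc]; exact Submodule.smul_mem _ _ (hx u hu)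
  | lie x y _ _ hx hy =>
    intro u hu; rw [ιU_lie, sub_mul, mul_assoc, mul_assoc]
    exact sub_mem (hx _ (hy u hu)) (hy _ (hx u hu))

theorem mem_triSub (x : 𝓤) : x ∈ g.triSub := by
  have hx : x ∈ Algebra.adjoin ℂ (Set.range (ιU : L → 𝓤)) := by rw [U_adjoin]; trivial
  have key : ∀ u ∈ g.triSub, x * u ∈ g.triSub := by
    induction hx using Algebra.adjoin_induction with
    | mem x h => obtain ⟨y, rfl⟩ := h; exact g.triSub_ι y
    | algebraMap r =>
      intro u hu; rw [← Algebra.smul_def]; exact Submodule.smul_mem _ _ hu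
    | add a b _ _ ha hb => intro u hu; rw [add_mul]; exact add_mem (ha u hu) (hb u hu)
    | mul a b _ _ ha hb => intro u hu; rw [mul_assoc]; exact ha _ (hb u hu)
  simpa using key 1 (g.mem_triSub_of_negMon .one)

theorem adU_ht_mem {x : 𝓤} (hx : x ∈ g.nIdeal) : adU g.ht x ∈ g.nIdeal := by
  obtain ⟨a, b, rfl⟩ := Ideal.mem_span_pair.1 hx
  have h1 : adU g.ht (ιU g.E10) = (1 : ℂ) • ιU g.E10 := HasWt.of_lie g.htE10
  have h2 : adU g.ht (ιU g.E01) = (1 : ℂ) • ιU g.E01 := HasWt.of_lie g.htE01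
  rw [adU_add, adU_mul, adU_mul, h1, h2, one_smul, one_smul]
  have e1 := g.E10_mem
  have e2 := g.E01_mem
  exact add_mem (add_mem (Ideal.mul_mem_left _ _ e1) (Ideal.mul_mem_left _ _ e1))
    (add_mem (Ideal.mul_mem_left _ _ e2) (Ideal.mul_mem_left _ _ e2))

theorem aeval_ht_mem (p : Polynomial ℂ) {x : 𝓤} (hx : x ∈ g.nIdeal) :
    Polynomial.aeval (adLin g.ht) p x ∈ g.nIdeal := by
  induction p using Polynomial.induction_on' with
  | add p q hp hq => rw [map_add, LinearMap.add_apply]; exact add_mem hp hq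
  | monomial n c =>
    rw [Polynomial.aeval_monomial, Module.End.mul_apply, Module.algebraMap_end_apply]
    apply g.nIdeal_smul
    induction n with
    | zero => simpa using hx
    | succ n ih => rw [pow_succ', Module.End.mul_apply, adLin_apply]; exact g.adU_ht_mem ih

theorem aeval_wt (p : Polynomial ℂ) {x : 𝓤} {k : ℂ} (hx : HasWt g.ht k x) :
    Polynomial.aeval (adLin g.ht) p x = p.eval k • x := by
  induction p using Polynomial.induction_on' with
  | add p q hp hq => rw [map_add, LinearMap.add_apply, hp, hq, Polynomial.eval_add, add_smul]
  | monomial n c =>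
    rw [Polynomial.aeval_monomial, Module.End.mul_apply, Module.algebraMap_end_apply,
      Polynomial.eval_monomial, mul_smul]
    congr 1
    induction n with
    | zero => simp
    | succ n ih =>
      rw [pow_succ', Module.End.mul_apply, ih, map_smul, adLin_apply, hx, smul_smul, pow_succ]

/-- Positive weight elements of `U` lie in `U n₊`. -/
theorem mem_of_pos_wt {x : 𝓤} {k : ℕ} (hk : 0 < k) (hx : HasWt g.ht (k : ℂ) x) :
    x ∈ g.nIdeal := by
  obtain ⟨y, hy, z, hz, hyz⟩ := Submodule.mem_sup.1 (g.mem_triSub x)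
  have key : ∃ p : Polynomial ℂ, p.eval (k : ℂ) ≠ 0 ∧
      Polynomial.aeval (adLin g.ht) p y = 0 := by
    clear hyz
    induction hy using Submodule.span_induction with
    | mem y hy =>
      obtain ⟨j, hj⟩ := NegMon.wt g hy
      refine ⟨Polynomial.X + Polynomial.C (j : ℂ), ?_, ?_⟩
      · rw [Polynomial.eval_add, Polynomial.eval_X, Polynomial.eval_C]
        norm_cast; omega
      · rw [g.aeval_wt _ hj]; simp
    | zero => exact ⟨1, by simp, by simp⟩
    | add a b _ _ ha hb =>
      obtain ⟨p, hp, hp'⟩ := ha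
      obtain ⟨q, hq, hq'⟩ := hb
      refine ⟨p * q, by simp [hp, hq], ?_⟩
      have h1 : Polynomial.aeval (adLin g.ht) (p * q) a = 0 := by
        rw [mul_comm, map_mul, Module.End.mul_apply, hp', map_zero]
      have h2 : Polynomial.aeval (adLin g.ht) (p * q) b = 0 := by
        rw [map_mul, Module.End.mul_apply, hq', map_zero]
      rw [map_add, h1, h2, add_zero]
    | smul c a _ ha =>
      obtain ⟨p, hp, hp'⟩ := ha
      exact ⟨p, hp, by rw [map_smul, hp', smul_zero]⟩
  obtain ⟨p, hp, hp'⟩ := key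
  have h1 := g.aeval_wt p hx
  rw [← hyz, map_add, hp', zero_add, hyz] at h1
  have h2 : p.eval (k : ℂ) • x ∈ g.nIdeal := h1 ▸ g.aeval_ht_mem p hz
  have h3 := g.nIdeal_smul (p.eval (k : ℂ))⁻¹ h2
  rwa [smul_smul, inv_mul_cancel₀ hp, one_smul] at h3

end G2Gens
namespace G2Gens
variable {L : Type*} [LieRing L] [LieAlgebra ℂ L] (g : G2Gens L)

local notation "𝓤" => UniversalEnvelopingAlgebra ℂ L

/-- Modulo `U n₊` the adjoint action of `e ∈ n₊` is left multiplication. -/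
theorem adU_iter_sub_mem {e : L} (he : ιU e ∈ g.nIdeal) (n : ℕ) (x : 𝓤) :
    (adU e)^[n] x - ιU e ^ n * x ∈ g.nIdeal := by
  induction n with
  | zero => simp
  | succ n ih =>
    rw [Function.iterate_succ_apply', pow_succ', mul_assoc]
    have h : adU e ((adU e)^[n] x) - ιU e * (ιU e ^ n * x)
        = ιU e * ((adU e)^[n] x - ιU e ^ n * x) - (adU e)^[n] x * ιU e := by
      rw [adU]; noncomm_ring
    rw [h]
    exact sub_mem (Ideal.mul_mem_left _ _ ih) (Ideal.mul_mem_left _ _ he)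

/-- The product of shifted coroots. -/
noncomputable def cop (h : L) (n : ℂ) (r : ℕ) : 𝓤 :=
  ((List.range r).map (fun j : ℕ => ιU h - (n - ((j : ℂ) + 1)) • 1)).prod

theorem cop_succ (h : L) (n : ℂ) (r : ℕ) :
    cop h (n + 1) (r + 1) = (ιU h - n • 1) * cop h n r := by
  unfold cop
  rw [List.range_succ_eq_map, List.map_cons, List.prod_cons, List.map_map]
  congr 1
  · simp
  · congr 1
    apply List.map_congr_left
    intro j _
    simp only [Function.comp_apply]
    congr 2
    push_cast; ring

theorem ef_mem {e f h : L} (h1 : ⁅e, f⁆ = h) (h2 : ⁅h, e⁆ = (2 : ℂ) • e) {m : ℕ} {z : 𝓤}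
    (hz : ιU e ^ (m + 1) * z ∈ g.nIdeal) (r : ℕ) :
    ιU e ^ (r + m + 1) * (ιU f ^ r * z) ∈ g.nIdeal ∧
    ιU e ^ (r + m) * (ιU f ^ r * z)
      - (((r + m).factorial : ℂ) / (m.factorial : ℂ)) •
        (cop h ((r : ℂ) + m) r * (ιU e ^ m * z)) ∈ g.nIdeal := by
  induction r with
  | zero =>
    have hm : (m.factorial : ℂ) ≠ 0 := by exact_mod_cast m.factorial_ne_zero
    constructor
    · simpa using hz
    · simp [cop, div_self hm]
  | succ r ih =>
    obtain ⟨ih1, ih2⟩ := ih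
    have step : ∀ N : ℕ, ιU e ^ (N + 1) * (ιU f ^ (r + 1) * z)
        = ιU f * (ιU e ^ (N + 1) * (ιU f ^ r * z))
          + ((N : ℂ) + 1) • ((ιU h - (N : ℂ) • 1) * (ιU e ^ N * (ιU f ^ r * z))) := by
      intro N
      rw [pow_succ' (ιU f), mul_assoc, ← mul_assoc (ιU e ^ (N + 1)), sl2_comm h1 h2 N, add_mul,
        smul_mul_assoc, mul_assoc, mul_assoc]
    have e1 : r + 1 + m = r + m + 1 := by ring
    constructor
    · rw [e1, step]
      refine add_mem (Ideal.mul_mem_left _ _ ?_)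
        (g.nIdeal_smul _ (Ideal.mul_mem_left _ _ ih1))
      rw [pow_succ', mul_assoc]
      exact Ideal.mul_mem_left _ _ ih1
    · rw [e1, step, Nat.factorial_succ]
      have e2 : (((r + 1 : ℕ) : ℂ) + m) = ((r : ℂ) + m) + 1 := by push_cast; ring
      rw [e2, cop_succ, add_sub_assoc]
      refine add_mem (Ideal.mul_mem_left _ _ ih1) ?_
      have h3 := g.nIdeal_smul (((r + m : ℕ) : ℂ) + 1)
        (Ideal.mul_mem_left _ (ιU h - ((r + m : ℕ) : ℂ) • 1) ih2)
      convert h3 using 1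
      rw [mul_sub, smul_sub, mul_smul_comm, smul_smul, mul_assoc]
      push_cast
      rw [mul_div_assoc]

theorem core {e f h φ : L} (h1 : ⁅e, f⁆ = h) (h2 : ⁅h, e⁆ = (2 : ℂ) • e)
    (he : ιU e ∈ g.nIdeal) {p m : ℕ} {q : ℚ} {x y u : 𝓤} (hx : DivTop φ p x ((q : ℂ) • ιU f))
    (hy : DivTop φ (p * m) y u)
    (hw : (adU e)^[m + 1] ((adU φ)^[p * m] y) ∈ g.nIdeal) (r : ℕ) :
    (adU e)^[r + m] ((adU φ)^[p * (r + m)] (x ^ r * y))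
      - ((q ^ r * ((p * (r + m)).factorial / (p * m).factorial)
          * ((r + m).factorial / m.factorial) : ℚ) : ℂ) •
        (cop h ((r + m : ℕ) : ℂ) r * (adU e)^[m] ((adU φ)^[p * m] y)) ∈ g.nIdeal := by
  have hz : ιU e ^ (m + 1) * ((adU φ)^[p * m] y) ∈ g.nIdeal := by
    have := sub_mem hw (g.adU_iter_sub_mem he (m + 1) ((adU φ)^[p * m] y))
    rwa [sub_sub_cancel] at this
  have hf : ((p * m).factorial : ℂ) ≠ 0 := by exact_mod_cast (p * m).factorial_ne_zero
  have hD : (adU φ)^[p * (r + m)] (x ^ r * y)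
      = ((q : ℂ) ^ r * ((p * (r + m)).factorial / (p * m).factorial)) •
        (ιU f ^ r * (adU φ)^[p * m] y) := by
    have := ((hx.pow r).mul hy).1
    rw [← mul_add] at this
    rw [this, hy.1, smul_pow, smul_mul_assoc, mul_smul_comm, smul_smul, smul_smul]
    congr 1
    field_simp
  have hA := (g.ef_mem h1 h2 hz r).2
  set z := (adU φ)^[p * m] y
  rw [hD, adU_iter_smul]
  have hB := g.adU_iter_sub_mem he (r + m) (ιU f ^ r * z)
  have hC := g.adU_iter_sub_mem he m z
  have hC' := g.nIdeal_smul (((r + m).factorial : ℂ) / (m.factorial : ℂ))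
    (Ideal.mul_mem_left _ (cop h ((r : ℂ) + m) r) hC)
  have := g.nIdeal_smul ((q : ℂ) ^ r * ((p * (r + m)).factorial / (p * m).factorial))
    (sub_mem (add_mem hB hA) hC')
  convert this using 1
  push_cast
  rw [mul_sub]
  module

-- weights for the height grading
theorem htE11 : ⁅g.ht, g.E11⁆ = (2 : ℂ) • g.E11 := by
  rw [ht, add_lie, smul_lie, smul_lie, H10E11, H01E11]; module
theorem htE21 : ⁅g.ht, g.E21⁆ = (3 : ℂ) • g.E21 := by
  rw [ht, add_lie, smul_lie, smul_lie, H10E21, H01E21]; module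
theorem htE31 : ⁅g.ht, g.E31⁆ = (4 : ℂ) • g.E31 := by
  rw [ht, add_lie, smul_lie, smul_lie, H10E31, H01E31]; module
theorem htE32 : ⁅g.ht, g.E32⁆ = (5 : ℂ) • g.E32 := by
  rw [ht, add_lie, smul_lie, smul_lie, H10E32, H01E32]; module
theorem htF21 : ⁅g.ht, g.F21⁆ = (-3 : ℂ) • g.F21 := by
  rw [ht, add_lie, smul_lie, smul_lie, H10F21, H01F21]; module
theorem htF31 : ⁅g.ht, g.F31⁆ = (-4 : ℂ) • g.F31 := by
  rw [ht, add_lie, smul_lie, smul_lie, H10F31, H01F31]; module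
theorem htF32 : ⁅g.ht, g.F32⁆ = (-5 : ℂ) • g.F32 := by
  rw [ht, add_lie, smul_lie, smul_lie, H10F32, H01F32]; module

theorem wt_b : HasWt g.ht 6 g.bU := by
  have e1 := (HasWt.of_lie g.htE31).mul (HasWt.of_lie g.htE11)
  have e2 := (HasWt.of_lie g.htE32).mul (HasWt.of_lie g.htE10)
  norm_num at e1 e2
  exact e1.sub e2
theorem wt_c : HasWt g.ht 9 g.cU := by
  have e1 := ((HasWt.of_lie g.htE31).mul (HasWt.of_lie g.htE31)).mul (HasWt.of_lie g.htE01)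
  have e2 := ((HasWt.of_lie g.htE32).mul (HasWt.of_lie g.htE31)).mul (HasWt.of_lie g.htH01)
  have e3 := ((HasWt.of_lie g.htE32).mul (HasWt.of_lie g.htE32)).mul (HasWt.of_lie g.htF01)
  norm_num at e1 e2 e3
  exact (e1.sub e2).sub e3
theorem wt_y (s t : ℕ) : HasWt g.ht (3 * ((2 * s + 3 * t : ℕ) : ℂ)) (g.bU ^ s * g.cU ^ t) := by
  convert (g.wt_b.pow s).mul (g.wt_c.pow t) using 1
  push_cast; ring

theorem top_y {φ : L} {p : ℕ} (hb : ∃ u, DivTop φ (p * 2) g.bU u)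
    (hc : ∃ u, DivTop φ (p * 3) g.cU u) (s t : ℕ) :
    ∃ u, DivTop φ (p * (2 * s + 3 * t)) (g.bU ^ s * g.cU ^ t) u := by
  obtain ⟨v, hv⟩ := hb
  obtain ⟨w, hw⟩ := hc
  refine ⟨v ^ s * w ^ t, ?_⟩
  have := (hv.pow s).mul (hw.pow t)
  convert this using 1
  ring

theorem DivTop_ι0 {φ x : L} (h : ⁅φ, x⁆ = 0) : DivTop φ 0 (ιU x) (ιU x) :=
  DivTop.zero (by rw [adU_ι, h, ιU_zero])
theorem DivTop_ι1 {φ x t : L} (h : ⁅φ, x⁆ = t) (h' : ⁅φ, t⁆ = 0) : DivTop φ 1 (ιU x) (ιU t) :=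
  DivTop.step (by rw [adU_ι, h]; simpa using DivTop_ι0 h')
theorem DivTop_ι2 {φ x y t : L} (h : ⁅φ, x⁆ = y) (h' : ⁅φ, y⁆ = (2 : ℂ) • t)
    (h'' : ⁅φ, t⁆ = 0) : DivTop φ 2 (ιU x) (ιU t) :=
  DivTop.step (by
    have := DivTop_ι1 (t := (2 : ℂ) • t) h' (by rw [lie_smul, h'', smul_zero])
    rw [adU_ι, h]; rw [ιU_smul] at this; exact_mod_cast this)
theorem DivTop_ι3 {φ x y y' t : L} (h : ⁅φ, x⁆ = y) (h' : ⁅φ, y⁆ = y')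
    (h2 : ⁅φ, y'⁆ = (6 : ℂ) • t) (h3 : ⁅φ, t⁆ = 0) : DivTop φ 3 (ιU x) (ιU t) :=
  DivTop.step (by
    have := DivTop_ι2 (t := (3 : ℂ) • t) h' (by rw [h2]; module) (by rw [lie_smul, h3, smul_zero])
    rw [adU_ι, h]; rw [ιU_smul] at this; exact_mod_cast this)

theorem ι_comm {x y : L} (h : ⁅x, y⁆ = 0) : ιU x * ιU y = ιU y * ιU x := by
  have := ιU_lie x y
  rw [h, ιU_zero] at this
  exact (sub_eq_zero.1 this.symm)

-- tops with respect to F21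
theorem top21_a : DivTop g.F21 2 g.aU (((-1 : ℚ) : ℂ) • ιU g.F21) := by
  rw [← ιU_smul]
  refine DivTop_ι2 g.F21E21 ?_ (by rw [lie_smul, lie_self, smul_zero])
  simp only [H21, lie_neg, lie_add, lie_smul, F21H10, F21H01]; push_cast; module
theorem top21_E31 : DivTop g.F21 3 (ιU g.E31) (ιU g.F32) :=
  DivTop_ι3 g.F21E31 g.F21E10 (by rw [lie_smul, F21F11]; module) g.F21F32
theorem top21_E32 : DivTop g.F21 3 (ιU g.E32) (ιU (-g.F31)) :=
  DivTop_ι3 g.F21E32 g.F21E11 (by rw [lie_smul, F21F10]; module) (by rw [lie_neg, F21F31, neg_zero])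
theorem top21_E11 : DivTop g.F21 2 (ιU g.E11) (ιU ((-3 : ℂ) • g.F31)) :=
  DivTop_ι2 g.F21E11 (by rw [lie_smul, F21F10]) (by rw [lie_smul, F21F31, smul_zero])
theorem top21_E10 : DivTop g.F21 2 (ιU g.E10) (ιU ((3 : ℂ) • g.F32)) :=
  DivTop_ι2 g.F21E10 (by rw [lie_smul, F21F11]; module) (by rw [lie_smul, F21F32, smul_zero])
theorem top21_b : ∃ u, DivTop g.F21 (2 * 2) g.bU u := by
  have h := (g.top21_E31.mul g.top21_E11).sub (g.top21_E32.mul g.top21_E10)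
  have e : ιU g.F32 * ιU ((-3 : ℂ) • g.F31) - ιU (-g.F31) * ιU ((3 : ℂ) • g.F32) = 0 := by
    rw [ιU_smul, ιU_smul, ιU_neg, mul_smul_comm, mul_smul_comm, ι_comm g.F32F31, neg_mul]; module
  rw [e] at h
  exact DivTop.drop h
theorem top21_c : ∃ u, DivTop g.F21 (2 * 3) g.cU u :=
  ⟨_, (((g.top21_E31.mul g.top21_E31).mul (DivTop_ι0 g.F21E01)).sub
    ((g.top21_E32.mul g.top21_E31).mul (DivTop_ι0 g.F21H01))).sub
    ((g.top21_E32.mul g.top21_E32).mul (DivTop_ι0 g.F21F01))⟩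

-- tops with respect to F31
theorem top31_a : DivTop g.F31 1 g.aU (((1 : ℚ) : ℂ) • ιU g.F10) := by
  rw [← ιU_smul]
  exact DivTop_ι1 (by rw [F31E21]; simp) (by rw [lie_smul, F31F10, smul_zero])
theorem top31_E31 : DivTop g.F31 2 (ιU g.E31) (ιU (-g.F31)) :=
  DivTop_ι2 g.F31E31 (by simp only [H31, lie_neg, lie_add, F31H10, F31H01]; module) (by simp)
theorem top31_E32 : DivTop g.F31 1 (ιU g.E32) (ιU g.E01) := DivTop_ι1 g.F31E32 g.F31E01
theorem top31_E10 : DivTop g.F31 1 (ιU g.E10) (ιU (-g.F21)) :=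
  DivTop_ι1 g.F31E10 (by rw [lie_neg, F31F21, neg_zero])
theorem top31_b : ∃ u, DivTop g.F31 (1 * 2) g.bU u :=
  ⟨_, (g.top31_E31.mul (DivTop_ι0 g.F31E11)).sub (g.top31_E32.mul g.top31_E10)⟩
theorem top31_c : ∃ u, DivTop g.F31 (1 * 3) g.cU u := by
  have e1 := (g.top31_E31.mul g.top31_E31).mul (DivTop_ι0 g.F31E01)
  have e2 := (g.top31_E32.mul g.top31_E31).mul
    (DivTop_ι1 g.F31H01 (t := -g.F31) (by simp))
  have e3 := ((g.top31_E32.mul g.top31_E32).mul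
    (DivTop_ι1 g.F31F01 (by rw [lie_neg, F31F32, neg_zero]))).up
  have h := (e1.sub e2).sub e3
  have e : ιU (-g.F31) * ιU (-g.F31) * ιU g.E01 - ιU g.E01 * ιU (-g.F31) * ιU (-g.F31) - 0
      = 0 := by
    have hc := ι_comm g.F31E01
    simp only [ιU_neg, neg_mul, mul_neg, neg_neg, sub_zero, mul_assoc, hc]
    rw [← mul_assoc, hc, mul_assoc, sub_self]
  rw [e] at h
  exact DivTop.drop h

-- tops with respect to F32
theorem top32_a : DivTop g.F32 1 g.aU (((1 : ℚ) : ℂ) • ιU g.F11) := by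
  rw [← ιU_smul]
  exact DivTop_ι1 (by rw [F32E21]; simp) (by rw [lie_smul, F32F11, smul_zero])
theorem top32_E31 : DivTop g.F32 1 (ιU g.E31) (ιU g.F01) := DivTop_ι1 g.F32E31 g.F32F01
theorem top32_E32 : DivTop g.F32 2 (ιU g.E32) (ιU (-g.F32)) :=
  DivTop_ι2 g.F32E32 (by simp only [H32, lie_neg, lie_add, lie_smul, F32H10, F32H01]; module)
    (by simp)
theorem top32_E11 : DivTop g.F32 1 (ιU g.E11) (ιU (-g.F21)) :=
  DivTop_ι1 g.F32E11 (by rw [lie_neg, F32F21, neg_zero])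
theorem top32_b : ∃ u, DivTop g.F32 (1 * 2) g.bU u :=
  ⟨_, (g.top32_E31.mul g.top32_E11).sub (g.top32_E32.mul (DivTop_ι0 g.F32E10))⟩
theorem top32_c : ∃ u, DivTop g.F32 (1 * 3) g.cU u := by
  have e1 := ((g.top32_E31.mul g.top32_E31).mul
    (DivTop_ι1 g.F32E01 (by rw [lie_neg, F32F31, neg_zero]))).up
  have e2 := (g.top32_E32.mul g.top32_E31).mul (DivTop_ι1 g.F32H01 (lie_self _))
  have e3 := (g.top32_E32.mul g.top32_E32).mul (DivTop_ι0 g.F32F01)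
  have h := (e1.sub e2).sub e3
  have e : 0 - ιU (-g.F32) * ιU g.F01 * ιU g.F32 - ιU (-g.F32) * ιU (-g.F32) * ιU g.F01
      = 0 := by
    have hc := ι_comm g.F32F01
    simp only [ιU_neg, neg_mul, mul_neg, neg_neg, mul_assoc, hc, zero_sub]
    rw [← mul_assoc, ← mul_assoc, hc, sub_self]
  rw [e] at h
  exact DivTop.drop h

end G2Gens

/-- **Lemma A.6 (lem-thirdstep).**  For `n = r + 2s + 3t`, the operators
`(E^n F^{2n})_L` (resp. `(E^n F^n)_L`) strip off the factor `a^r` at the cost of a falling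
factorial in the corresponding coroot, modulo `U(𝔤)𝔫₊`; the constants depend only on `n`
and `r`. -/
theorem G2Gens.strip_a_power_congruences
    {L : Type*} [LieRing L] [LieAlgebra ℂ L] (g : G2Gens L) (n r : ℕ) (hrn : r ≤ n) :
    ∃ C₁ C₂ C₃ : ℚ, C₁ ≠ 0 ∧ C₂ ≠ 0 ∧ C₃ ≠ 0 ∧
      ∀ s t : ℕ, n = r + 2 * s + 3 * t →
        g.EqModN ((adU g.E21)^[n] ((adU g.F21)^[2 * n] (g.aU ^ r * g.bU ^ s * g.cU ^ t)))
          ((C₁ : ℂ) •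
            (((List.range r).map
                (fun j : ℕ => ιU g.H21 - ((n : ℂ) - ((j : ℂ) + 1)) • 1)).prod
              * (adU g.E21)^[n - r] ((adU g.F21)^[2 * (n - r)] (g.bU ^ s * g.cU ^ t)))) ∧
        g.EqModN ((adU g.E10)^[n] ((adU g.F31)^[n] (g.aU ^ r * g.bU ^ s * g.cU ^ t)))
          ((C₂ : ℂ) •
            (((List.range r).map
                (fun j : ℕ => ιU g.H10 - ((n : ℂ) - ((j : ℂ) + 1)) • 1)).prod
              * (adU g.E10)^[n - r] ((adU g.F31)^[n - r] (g.bU ^ s * g.cU ^ t)))) ∧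
        g.EqModN ((adU g.E11)^[n] ((adU g.F32)^[n] (g.aU ^ r * g.bU ^ s * g.cU ^ t)))
          ((C₃ : ℂ) •
            (((List.range r).map
                (fun j : ℕ => ιU g.H11 - ((n : ℂ) - ((j : ℂ) + 1)) • 1)).prod
              * (adU g.E11)^[n - r] ((adU g.F32)^[n - r] (g.bU ^ s * g.cU ^ t)))) := by
  obtain ⟨m, rfl⟩ := Nat.exists_eq_add_of_le hrn
  have hfac : ∀ k : ℕ, (k.factorial : ℚ) ≠ 0 := fun k => by exact_mod_cast k.factorial_ne_zero
  refine ⟨(-1 : ℚ) ^ r * ((2 * (r + m)).factorial / (2 * m).factorial)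
      * ((r + m).factorial / m.factorial),
    (1 : ℚ) ^ r * ((1 * (r + m)).factorial / (1 * m).factorial)
      * ((r + m).factorial / m.factorial),
    (1 : ℚ) ^ r * ((1 * (r + m)).factorial / (1 * m).factorial)
      * ((r + m).factorial / m.factorial), ?_, ?_, ?_, ?_⟩
  · exact mul_ne_zero (mul_ne_zero (pow_ne_zero _ (by norm_num)) (div_ne_zero (hfac _) (hfac _)))
      (div_ne_zero (hfac _) (hfac _))
  · exact mul_ne_zero (mul_ne_zero (pow_ne_zero _ (by norm_num)) (div_ne_zero (hfac _) (hfac _)))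
      (div_ne_zero (hfac _) (hfac _))
  · exact mul_ne_zero (mul_ne_zero (pow_ne_zero _ (by norm_num)) (div_ne_zero (hfac _) (hfac _)))
      (div_ne_zero (hfac _) (hfac _))
  intro s t hst
  obtain rfl : m = 2 * s + 3 * t := by omega
  have hy := g.wt_y s t
  rw [Nat.add_sub_cancel_left, mul_assoc]
  refine ⟨g.eqModN_of_mem ?_, g.eqModN_of_mem ?_, g.eqModN_of_mem ?_⟩
  · obtain ⟨u, hu⟩ := g.top_y g.top21_b g.top21_c s t
    refine g.core (lie_flip g.F21E21 |>.trans (neg_neg _)) ?_ g.E21_mem g.top21_a hu ?_ r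
    · rw [H21, add_lie, smul_lie, smul_lie, H10E21, H01E21]; module
    · refine g.mem_of_pos_wt (k := 3) (by norm_num) ?_
      convert HasWt.adU_iter g.htE21 (HasWt.adU_iter g.htF21 hy _) _ using 1
      push_cast; ring
  · obtain ⟨u, hu⟩ := g.top_y g.top31_b g.top31_c s t
    have h := g.core g.hE10F10 g.hH10E10 g.E10_mem g.top31_a hu (g.mem_of_pos_wt (k := 1)
      (by norm_num) (by
        convert HasWt.adU_iter g.htE10 (HasWt.adU_iter g.htF31 hy _) _ using 1
        push_cast; ring)) r
    rw [one_mul (2 * s + 3 * t), one_mul (r + (2 * s + 3 * t))] at h ⊢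
    exact h
  · obtain ⟨u, hu⟩ := g.top_y g.top32_b g.top32_c s t
    have h := g.core (lie_flip g.F11E11 |>.trans (neg_neg _))
      (by rw [H11, add_lie, smul_lie, H10E11, H01E11]; module) g.E11_mem g.top32_a hu
      (g.mem_of_pos_wt (k := 2)
      (by norm_num) (by
        convert HasWt.adU_iter g.htE11 (HasWt.adU_iter g.htF32 hy _) _ using 1
        push_cast; ring)) r
    rw [one_mul (2 * s + 3 * t), one_mul (r + (2 * s + 3 * t))] at h ⊢
    exact h
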